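/- (Bagby–Bos–Levenberg polynomial approximation theorem.) Let X ⊂ ℝⁿ be compact and let h : ℝⁿ → ℝ be such that both h and its gradient ∇h are continuously differentiable (i.e., h is of class C² on a neighborhood of X). Then there exists a constant c₁ ≥ 0, depending only on h and X, such that for every integer d ≥ 1 there exists a real polynomial p_d in n variables with deg(p_d) ≤ d and ‖h − p_d‖_{C¹(X)} ≤ c₁/d. -/

import Mathlib

/-- `‖h‖_{C⁰(K)}`: supremum of `|h|` over `K`. -/
noncomputable def supNormC0 {E : Type*} (K : Set E) (h : E → ℝ) : ℝ :=
  sSup ((fun z => |h z|) '' K)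

/-- `‖h‖_{C¹(K)} := max_{x∈K}|h(x)| + max_{x∈K}‖∇h(x)‖₂`. -/
noncomputable def supNormC1 {n : ℕ} (K : Set (EuclideanSpace ℝ (Fin n)))
    (h : EuclideanSpace ℝ (Fin n) → ℝ) : ℝ :=
  supNormC0 K h + sSup ((fun z => ‖gradient h z‖) '' K)

open MeasureTheory Set Topology
open scoped Polynomial NNReal

noncomputable section

section DirichletKernel

open Real

/-- The polynomial of degree `2 * r` that turns into the Dirichlet kernel
`1 + 2 ∑_{k ≤ r} cos (2 k φ)` under the substitution `t = sin φ`. It is concentrated near `t = 0`;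
its fourth power is the Jackson kernel. -/
def dirichletPolynomial (r : ℕ) : ℝ[X] :=
  1 + 2 * ∑ k ∈ Finset.range r,
    (Polynomial.Chebyshev.T ℝ (k + 1)).comp (1 - 2 * Polynomial.X ^ 2)

variable {r : ℕ} {t : ℝ}

lemma natDegree_dirichletPolynomial_le (r : ℕ) : (dirichletPolynomial r).natDegree ≤ 2 * r := by
  have two_deg : (1 - 2 * Polynomial.X ^ 2 : ℝ[X]).natDegree ≤ 2 := by compute_degree
  have sum_deg : (∑ k ∈ Finset.range r,
      (Polynomial.Chebyshev.T ℝ (k + 1)).comp (1 - 2 * Polynomial.X ^ 2)).natDegree ≤ 2 * r := by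
    refine Polynomial.natDegree_sum_le_of_forall_le _ _ fun k hk => ?_
    refine Polynomial.natDegree_comp_le.trans ?_
    rw [Polynomial.Chebyshev.natDegree_T, mul_comm]
    exact Nat.mul_le_mul two_deg (by have := Finset.mem_range.1 hk; omega)
  unfold dirichletPolynomial
  compute_degree
  simpa using sum_deg

lemma eval_dirichletPolynomial (r : ℕ) (t : ℝ) :
    (dirichletPolynomial r).eval t =
      1 + 2 * ∑ k ∈ Finset.range r, (Polynomial.Chebyshev.T ℝ (k + 1)).eval (1 - 2 * t ^ 2) := by
  simp [dirichletPolynomial, Polynomial.eval_finsetSum]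

lemma sin_mul_eval_dirichletPolynomial_sin (r : ℕ) (φ : ℝ) :
    sin φ * (dirichletPolynomial r).eval (sin φ) = sin ((2 * r + 1) * φ) := by
  have cosine_form : (1 - 2 * sin φ ^ 2) = cos (2 * φ) := by rw [cos_two_mul, cos_sq']; ring
  have telescope (k : ℕ) : sin φ * (2 * cos (((k : ℤ) + 1 : ℤ) * (2 * φ))) =
      sin ((2 * (k + 1 : ℕ) + 1) * φ) - sin ((2 * k + 1) * φ) := by
    rw [sin_sub_sin]
    push_cast
    ring_nf
  rw [eval_dirichletPolynomial, cosine_form]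
  simp only [Polynomial.Chebyshev.T_real_cos]
  rw [mul_add, Finset.mul_sum, Finset.mul_sum, Finset.sum_congr rfl fun k _ => telescope k,
    Finset.sum_range_sub (fun k : ℕ => sin ((2 * k + 1) * φ))]
  simp

lemma abs_eval_dirichletPolynomial_le (ht : t ∈ Icc (-1) 1) :
    |(dirichletPolynomial r).eval t| ≤ 2 * r + 1 := by
  have harg : |1 - 2 * t ^ 2| ≤ 1 := by
    have := (sq_le_one_iff_abs_le_one t).2 (abs_le.2 ht)
    exact abs_le.2 ⟨by linarith, by linarith [sq_nonneg t]⟩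
  have hsum : |∑ k ∈ Finset.range r, (Polynomial.Chebyshev.T ℝ (k + 1)).eval (1 - 2 * t ^ 2)|
      ≤ r := by
    refine (Finset.abs_sum_le_sum_abs _ _).trans ?_
    simpa using Finset.sum_le_card_nsmul (Finset.range r) _ (1 : ℝ)
      fun k _ => Polynomial.Chebyshev.abs_eval_T_real_le_one (k + 1) harg
  rw [eval_dirichletPolynomial]
  calc _ ≤ |(1 : ℝ)| + |2 * _| := abs_add_le _ _
    _ ≤ 1 + 2 * r := by rw [abs_one, abs_mul, abs_two]; gcongr
    _ = 2 * r + 1 := add_comm _ _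

lemma abs_mul_eval_dirichletPolynomial_le_one (ht : t ∈ Icc (-1) 1) :
    |t * (dirichletPolynomial r).eval t| ≤ 1 := by
  rw [← sin_arcsin ht.1 ht.2, sin_mul_eval_dirichletPolynomial_sin]
  exact abs_sin_le_one _

lemma le_eval_dirichletPolynomial (ht : t ∈ Ioo 0 (1 / (2 * r + 1) : ℝ)) :
    (2 * r + 1 : ℝ) / 2 ≤ (dirichletPolynomial r).eval t := by
  obtain ⟨t_pos, t_lt⟩ := ht
  have hN : (1 : ℝ) ≤ 2 * r + 1 := by linarith [r.cast_nonneg (α := ℝ)]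
  have t_lt_one : t < 1 := t_lt.trans_le (by rw [div_le_one (by positivity)]; exact hN)
  have half_le : (1 / 2 : ℝ) ≤ 2 / π := by
    rw [div_le_div_iff₀ two_pos pi_pos]; linarith [pi_le_four]
  obtain ⟨φ, ⟨φ_nonneg, φ_le⟩, rfl⟩ : ∃ φ ∈ Icc 0 (π / 2), sin φ = t :=
    ⟨arcsin t, ⟨arcsin_nonneg.2 t_pos.le, arcsin_le_pi_div_two t⟩,
      sin_arcsin (by linarith) t_lt_one.le⟩
  have Nφ_le : (2 * r + 1) * φ ≤ π / 2 := by
    have := (mul_le_sin φ_nonneg φ_le).trans t_lt.le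
    rw [div_mul_eq_mul_div, div_le_div_iff₀ pi_pos (by positivity)] at this
    linarith
  refine le_of_mul_le_mul_left ?_ t_pos
  calc sin φ * ((2 * r + 1) / 2) ≤ φ * ((2 * r + 1) / 2) := by gcongr; exact sin_le φ_nonneg
    _ = 1 / 2 * ((2 * r + 1) * φ) := by ring
    _ ≤ 2 / π * ((2 * r + 1) * φ) := by gcongr
    _ ≤ sin ((2 * r + 1) * φ) := mul_le_sin (by positivity) Nφ_le
    _ = _ := (sin_mul_eval_dirichletPolynomial_sin r φ).symm

lemma le_integral_dirichletPolynomial_pow_four (r : ℕ) :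
    (2 * r + 1 : ℝ) ^ 3 / 16 ≤ ∫ t in (-1)..1, (dirichletPolynomial r).eval t ^ 4 := by
  set N : ℝ := 2 * r + 1
  have hN : 1 ≤ N := by linarith [r.cast_nonneg (α := ℝ)]
  have hint (a b : ℝ) : IntervalIntegrable (fun t => (dirichletPolynomial r).eval t ^ 4)
      volume a b := Continuous.intervalIntegrable (by fun_prop) a b
  calc N ^ 3 / 16 = ∫ _ in (0 : ℝ)..1 / N, (N / 2) ^ 4 := by
        rw [intervalIntegral.integral_const, smul_eq_mul]; field_simp; norm_num
    _ ≤ ∫ t in 0..1 / N, (dirichletPolynomial r).eval t ^ 4 := by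
        refine intervalIntegral.integral_mono_on_of_le_Ioo (by positivity) (by simp) (hint _ _)
          fun t ht => ?_
        gcongr
        exact le_eval_dirichletPolynomial ht
    _ ≤ ∫ t in (-1)..1, (dirichletPolynomial r).eval t ^ 4 := by
        refine intervalIntegral.integral_mono_interval (by simp) (by positivity)
          (div_le_one_of_le₀ hN (by positivity)) ?_ (hint _ _)
        exact .of_forall fun t => by positivity

lemma integral_dirichletPolynomial_sq_le (r : ℕ) :
    ∫ t in (-1)..1, (dirichletPolynomial r).eval t ^ 2 ≤ 2 * π * (2 * r + 1) := by
  set N : ℝ := 2 * r + 1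
  have hN : 0 < N := by positivity
  have pointwise : ∀ t ∈ Icc (-1 : ℝ) 1,
      (dirichletPolynomial r).eval t ^ 2 ≤ 2 * N ^ 2 * (1 + (N * t) ^ 2)⁻¹ := by
    intro t ht
    have hsq := sq_le_sq.2 ((abs_eval_dirichletPolynomial_le (r := r) ht).trans (le_abs_self _))
    have hmul := (sq_le_one_iff_abs_le_one _).2
      (abs_mul_eval_dirichletPolynomial_le_one (r := r) ht)
    rw [← div_eq_mul_inv, le_div_iff₀ (by positivity)]
    calc _ = (dirichletPolynomial r).eval t ^ 2
          + N ^ 2 * (t * (dirichletPolynomial r).eval t) ^ 2 := by ring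
      _ ≤ N ^ 2 + N ^ 2 * 1 := by gcongr
      _ = 2 * N ^ 2 := by ring
  have hcont : Continuous fun t : ℝ => 2 * N ^ 2 * (1 + (N * t) ^ 2)⁻¹ :=
    continuous_const.mul (Continuous.inv₀ (by fun_prop) fun t => by positivity)
  calc ∫ t in (-1)..1, (dirichletPolynomial r).eval t ^ 2
      ≤ ∫ t in (-1)..1, 2 * N ^ 2 * (1 + (N * t) ^ 2)⁻¹ :=
        intervalIntegral.integral_mono_on (by norm_num)
          (Continuous.intervalIntegrable (by fun_prop) _ _)
          (hcont.intervalIntegrable _ _) pointwise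
    _ = 2 * N * (arctan (N * 1) - arctan (N * -1)) := by
        rw [intervalIntegral.integral_const_mul,
          intervalIntegral.integral_comp_mul_left (fun s => (1 + s ^ 2)⁻¹) hN.ne',
          integral_inv_one_add_sq, smul_eq_mul]
        field_simp
    _ ≤ 2 * N * π := by
        gcongr
        linarith [arctan_lt_pi_div_two (N * 1), neg_pi_div_two_lt_arctan (N * -1)]
    _ = 2 * π * N := by ring

lemma integral_abs_mul_dirichletPolynomial_pow_four_le (r : ℕ) :
    ∫ t in (-1)..1, |t| * (dirichletPolynomial r).eval t ^ 4 ≤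
      32 * π / (2 * r + 1) * ∫ t in (-1)..1, (dirichletPolynomial r).eval t ^ 4 := by
  set N : ℝ := 2 * r + 1
  have hN : 0 < N := by positivity
  have pointwise : ∀ t ∈ Icc (-1 : ℝ) 1,
      |t| * (dirichletPolynomial r).eval t ^ 4 ≤ N * (dirichletPolynomial r).eval t ^ 2 := by
    intro t ht
    calc |t| * (dirichletPolynomial r).eval t ^ 4
        = |t * (dirichletPolynomial r).eval t| * |(dirichletPolynomial r).eval t|
          * (dirichletPolynomial r).eval t ^ 2 := by
          rw [abs_mul, mul_assoc |t|, abs_mul_abs_self]; ring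
      _ ≤ 1 * N * (dirichletPolynomial r).eval t ^ 2 := by
          gcongr
          · exact abs_mul_eval_dirichletPolynomial_le_one ht
          · exact abs_eval_dirichletPolynomial_le ht
      _ = _ := by rw [one_mul]
  calc ∫ t in (-1)..1, |t| * (dirichletPolynomial r).eval t ^ 4
      ≤ ∫ t in (-1)..1, N * (dirichletPolynomial r).eval t ^ 2 :=
        intervalIntegral.integral_mono_on (by norm_num)
          (Continuous.intervalIntegrable (by fun_prop) _ _)
          (Continuous.intervalIntegrable (by fun_prop) _ _) pointwise
    _ ≤ N * (2 * π * N) := by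
        rw [intervalIntegral.integral_const_mul]
        gcongr
        exact integral_dirichletPolynomial_sq_le r
    _ = 32 * π / N * (N ^ 3 / 16) := by field_simp; norm_num
    _ ≤ _ := by gcongr; exact le_integral_dirichletPolynomial_pow_four r

lemma setIntegral_Icc_neg_comp_div {R : ℝ} (hR : 0 < R) (f : ℝ → ℝ) :
    ∫ t in Icc (-R) R, f (t / R) = R * ∫ s in (-1)..1, f s := by
  rw [integral_Icc_eq_integral_Ioc, ← intervalIntegral.integral_of_le (by linarith),
    intervalIntegral.integral_comp_div f hR.ne', neg_div, div_self hR.ne', smul_eq_mul]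

lemma exists_normalized_rescaled_polynomial {p : ℝ[X]} (hp : ∀ t, 0 ≤ p.eval t)
    (mass_pos : 0 < ∫ t in (-1)..1, p.eval t) {c R : ℝ} (hR : 0 < R)
    (moment_le : ∫ t in (-1)..1, |t| * p.eval t ≤ c * ∫ t in (-1)..1, p.eval t) :
    ∃ q : ℝ[X], q.natDegree ≤ p.natDegree ∧ (∀ t, 0 ≤ q.eval t) ∧
      ∫ t in Icc (-R) R, q.eval t = 1 ∧ ∫ t in Icc (-R) R, |t| * q.eval t ≤ c * R := by
  set I := ∫ t in (-1)..1, p.eval t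
  set q : ℝ[X] := .C (R * I)⁻¹ * p.comp (.C R⁻¹ * .X)
  have eval_q (t : ℝ) : q.eval t = (R * I)⁻¹ * p.eval (t / R) := by simp [q, div_eq_inv_mul]
  have abs_mul_eval_q (t : ℝ) : |t| * q.eval t = I⁻¹ * (|t / R| * p.eval (t / R)) := by
    rw [eval_q, abs_div, abs_of_pos hR]; field_simp
  refine ⟨q, ?_, fun t => ?_, ?_, ?_⟩
  · calc q.natDegree ≤ p.natDegree * (.C R⁻¹ * .X : ℝ[X]).natDegree :=
          (Polynomial.natDegree_C_mul_le _ _).trans Polynomial.natDegree_comp_le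
      _ ≤ p.natDegree * 1 := by gcongr; compute_degree
      _ = p.natDegree := mul_one _
  · rw [eval_q]
    exact mul_nonneg (by positivity) (hp _)
  · simp only [eval_q, integral_const_mul]
    rw [setIntegral_Icc_neg_comp_div hR fun s => p.eval s]
    exact inv_mul_cancel₀ (by positivity)
  · simp only [abs_mul_eval_q, integral_const_mul]
    rw [setIntegral_Icc_neg_comp_div hR fun s => |s| * p.eval s]
    calc I⁻¹ * (R * ∫ s in (-1)..1, |s| * p.eval s) ≤ I⁻¹ * (R * (c * I)) := by gcongr
      _ = c * R := by field_simp

lemma exists_nonneg_polynomial_integral_abs_mul_le {R : ℝ} (hR : 0 < R) (m : ℕ) :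
    ∃ q : ℝ[X], q.natDegree ≤ m ∧ (∀ t, 0 ≤ q.eval t) ∧ ∫ t in Icc (-R) R, q.eval t = 1 ∧
      ∫ t in Icc (-R) R, |t| * q.eval t ≤ 256 * π / (m + 1) * R := by
  set D := dirichletPolynomial (m / 8)
  have mass_pos : 0 < ∫ t in (-1)..1, (D ^ 4).eval t := by
    simp only [Polynomial.eval_pow]
    exact lt_of_lt_of_le (by positivity) (le_integral_dirichletPolynomial_pow_four (m / 8))
  have moment_le : ∫ t in (-1)..1, |t| * (D ^ 4).eval t ≤
      256 * π / (m + 1) * ∫ t in (-1)..1, (D ^ 4).eval t := by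
    have hm : (m + 1 : ℝ) ≤ 8 * (2 * (m / 8 : ℕ) + 1) := by
      have : m + 1 ≤ 8 * (2 * (m / 8) + 1) := by omega
      exact_mod_cast this
    have hle : 32 * π / (2 * (m / 8 : ℕ) + 1) ≤ 256 * π / (m + 1) := by
      rw [div_le_div_iff₀ (by positivity) (by positivity)]
      nlinarith [pi_pos]
    refine le_trans ?_ (mul_le_mul_of_nonneg_right hle mass_pos.le)
    simpa only [Polynomial.eval_pow] using
      integral_abs_mul_dirichletPolynomial_pow_four_le (m / 8)
  obtain ⟨q, degree_q, hq⟩ := exists_normalized_rescaled_polynomial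
    (fun t => by rw [Polynomial.eval_pow]; positivity) mass_pos hR moment_le
  refine ⟨q, degree_q.trans ?_, hq⟩
  calc (D ^ 4).natDegree ≤ 4 * (2 * (m / 8)) :=
        Polynomial.natDegree_pow_le_of_le 4 (natDegree_dirichletPolynomial_le _)
    _ ≤ m := by omega

end DirichletKernel

section ProductKernel

variable {ι : Type*} {q : ℝ[X]}

/-- The cube `[-R, R] ^ ι`, as a subset of Euclidean space: the domain on which the
product kernels are normalized. -/
def cube (ι : Type*) (R : ℝ) : Set (EuclideanSpace ℝ ι) :=
  WithLp.ofLp ⁻¹' univ.pi fun _ => Icc (-R) R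

lemma isCompact_cube (R : ℝ) : IsCompact (cube ι R) :=
  (PiLp.homeomorph 2 fun _ : ι => ℝ).isCompact_preimage.2
    (isCompact_univ_pi fun _ => isCompact_Icc)

lemma totalDegree_toMvPolynomial_le {S : Type*} [CommSemiring S] (q : S[X]) (i : ι) :
    (q.toMvPolynomial i).totalDegree ≤ q.natDegree := by
  rcases subsingleton_or_nontrivial S
  · simp [Subsingleton.elim (q.toMvPolynomial i) 0]
  rw [Polynomial.toMvPolynomial, Polynomial.aeval_eq_sum_range]
  refine MvPolynomial.totalDegree_finsetSum_le fun k hk => ?_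
  exact (MvPolynomial.totalDegree_smul_le _ _).trans <|
    (MvPolynomial.totalDegree_X_pow i k).trans_le (Finset.mem_range_succ_iff.1 hk)

lemma continuous_eval_mvPolynomial (Q : MvPolynomial ι ℝ) :
    Continuous fun x : EuclideanSpace ℝ ι => MvPolynomial.eval x Q :=
  (MvPolynomial.continuous_eval Q).comp (PiLp.continuous_ofLp 2 _)

variable [Fintype ι]

lemma mem_cube_of_norm_le {R : ℝ} {x : EuclideanSpace ℝ ι} (hx : ‖x‖ ≤ R) : x ∈ cube ι R :=
  fun i _ => abs_le.1 ((PiLp.norm_apply_le x i).trans hx)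

lemma setIntegral_cube_prod {𝕜 : Type*} [RCLike 𝕜] (R : ℝ) (f : ι → ℝ → 𝕜) :
    ∫ t in cube ι R, ∏ i, f i (t i) = ∏ i, ∫ s in Icc (-R) R, f i s := by
  rw [cube, (PiLp.volume_preserving_ofLp ι).setIntegral_preimage_emb
    (MeasurableEquiv.toLp 2 (ι → ℝ)).symm.measurableEmbedding (fun t => ∏ i, f i (t i)), volume_pi,
    Measure.restrict_pi_pi, integral_fintype_prod_eq_prod]

lemma norm_le_sum_abs (x : EuclideanSpace ℝ ι) : ‖x‖ ≤ ∑ i, |x i| := by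
  rw [EuclideanSpace.norm_eq]
  exact Real.sqrt_le_iff.2 ⟨Finset.sum_nonneg fun i _ => abs_nonneg _,
    Finset.sum_sq_le_sq_sum_of_nonneg fun i _ => abs_nonneg _⟩

/-- The polynomial `∏ i, q (X i)`, the `ι`-fold tensor power of a univariate polynomial `q`. It
turns a kernel on the line into a kernel on `ℝ ^ ι`. -/
def tensorPower {S : Type*} [CommSemiring S] (ι : Type*) [Fintype ι] (q : S[X]) :
    MvPolynomial ι S :=
  ∏ i, q.toMvPolynomial i

lemma eval_tensorPower {S : Type*} [CommSemiring S] (q : S[X]) (x : ι → S) :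
    MvPolynomial.eval x (tensorPower ι q) = ∏ i, q.eval (x i) := by
  simp [tensorPower, map_prod]

lemma totalDegree_tensorPower_le {S : Type*} [CommSemiring S] (q : S[X]) :
    (tensorPower ι q).totalDegree ≤ Fintype.card ι * q.natDegree := by
  refine (MvPolynomial.totalDegree_finsetProd _ _).trans ?_
  simpa using Finset.sum_le_card_nsmul Finset.univ _ _
    fun i _ => totalDegree_toMvPolynomial_le q i

lemma setIntegral_abs_mul_tensorPower {R : ℝ} (mass_eq : ∫ t in Icc (-R) R, q.eval t = 1) (i : ι) :
    ∫ t in cube ι R, |t i| * MvPolynomial.eval t (tensorPower ι q) =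
      ∫ s in Icc (-R) R, |s| * q.eval s := by
  classical
  have as_product (t : EuclideanSpace ℝ ι) : |t i| * MvPolynomial.eval t (tensorPower ι q) =
      ∏ j, (if j = i then |t j| else 1) * q.eval (t j) := by
    rw [eval_tensorPower, Finset.prod_mul_distrib, Finset.prod_ite_eq' Finset.univ i,
      if_pos (Finset.mem_univ i)]
  simp only [as_product]
  rw [setIntegral_cube_prod R fun j s => (if j = i then |s| else 1) * q.eval s,
    Finset.prod_eq_single i]
  · simp
  · intro j _ hj
    simpa [hj] using mass_eq
  · simp

lemma setIntegral_norm_mul_tensorPower_le {R : ℝ} (hq : ∀ t, 0 ≤ q.eval t)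
    (mass_eq : ∫ t in Icc (-R) R, q.eval t = 1) :
    ∫ t in cube ι R, ‖t‖ * MvPolynomial.eval t (tensorPower ι q) ≤
      Fintype.card ι * ∫ s in Icc (-R) R, |s| * q.eval s := by
  have hint {f : EuclideanSpace ℝ ι → ℝ} (hf : Continuous f) :
      IntegrableOn (fun t => f t * MvPolynomial.eval t (tensorPower ι q)) (cube ι R) :=
    (hf.mul (continuous_eval_mvPolynomial _)).continuousOn.integrableOn_compact (isCompact_cube R)
  calc ∫ t in cube ι R, ‖t‖ * MvPolynomial.eval t (tensorPower ι q)
      ≤ ∫ t in cube ι R, ∑ i, |t i| * MvPolynomial.eval t (tensorPower ι q) := by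
        refine integral_mono (hint continuous_norm)
          (integrable_finsetSum _ fun i _ => hint (by fun_prop)) fun t => ?_
        simp only [← Finset.sum_mul, eval_tensorPower]
        exact mul_le_mul_of_nonneg_right (norm_le_sum_abs t) (Finset.prod_nonneg fun i _ => hq _)
    _ = Fintype.card ι * ∫ s in Icc (-R) R, |s| * q.eval s := by
        rw [integral_finsetSum _ fun i _ => hint (by fun_prop)]
        simp [setIntegral_abs_mul_tensorPower mass_eq]

lemma exists_nonneg_mvPolynomial_integral_norm_mul_le {R : ℝ} (hR : 0 < R) {d : ℕ} (hd : 1 ≤ d) :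
    ∃ Q : MvPolynomial ι ℝ, Q.totalDegree ≤ d ∧
      (∀ t : EuclideanSpace ℝ ι, 0 ≤ MvPolynomial.eval t Q) ∧
      ∫ t in cube ι R, MvPolynomial.eval t Q = 1 ∧
      ∫ t in cube ι R, ‖t‖ * MvPolynomial.eval t Q ≤
        256 * Real.pi * R * Fintype.card ι ^ 2 / d := by
  set n := Fintype.card ι
  obtain ⟨q, degree_q, q_nonneg, mass_eq, moment_le⟩ :=
    exists_nonneg_polynomial_integral_abs_mul_le hR (d / n)
  refine ⟨tensorPower ι q, ?_, fun t => ?_, ?_, ?_⟩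
  · calc _ ≤ n * q.natDegree := totalDegree_tensorPower_le q
      _ ≤ n * (d / n) := by gcongr
      _ ≤ d := Nat.mul_div_le d n
  · rw [eval_tensorPower]
    exact Finset.prod_nonneg fun i _ => q_nonneg _
  · simp only [eval_tensorPower]
    rw [setIntegral_cube_prod R fun _ s => q.eval s]
    simp [mass_eq]
  · have card_div_le : n / ((d / n : ℕ) + 1 : ℝ) ≤ n ^ 2 / d := by
      rcases n.eq_zero_or_pos with hn | hn
      · simp [hn]
      have : (d : ℝ) ≤ n * ((d / n : ℕ) + 1) := mod_cast (Nat.lt_mul_div_succ d hn).le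
      rw [div_le_div_iff₀ (by positivity) (by exact_mod_cast hd)]
      calc (n : ℝ) * d ≤ n * (n * ((d / n : ℕ) + 1)) := by gcongr
        _ = n ^ 2 * ((d / n : ℕ) + 1) := by ring
    calc _ ≤ n * (256 * Real.pi / ((d / n : ℕ) + 1) * R) :=
          (setIntegral_norm_mul_tensorPower_le q_nonneg mass_eq).trans (by gcongr)
      _ = 256 * Real.pi * R * (n / ((d / n : ℕ) + 1)) := by ring
      _ ≤ 256 * Real.pi * R * (n ^ 2 / d) := by gcongr
      _ = _ := by ring

end ProductKernel

section PolynomialConvolution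

lemma totalDegree_aeval_le {σ τ R S : Type*} [CommSemiring R] [CommSemiring S] [Algebra R S]
    {f : σ → MvPolynomial τ S} {k : ℕ} (hf : ∀ i, (f i).totalDegree ≤ k) (p : MvPolynomial σ R) :
    (MvPolynomial.aeval f p).totalDegree ≤ p.totalDegree * k := by
  rw [MvPolynomial.aeval_def, MvPolynomial.eval₂_eq]
  refine MvPolynomial.totalDegree_finsetSum_le fun α hα => ?_
  rw [MvPolynomial.algebraMap_apply]
  calc _ ≤ _ := MvPolynomial.totalDegree_mul _ _
    _ = (∏ i ∈ α.support, f i ^ α i).totalDegree := by rw [MvPolynomial.totalDegree_C, zero_add]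
    _ ≤ ∑ i ∈ α.support, (f i ^ α i).totalDegree := MvPolynomial.totalDegree_finsetProd _ _
    _ ≤ ∑ i ∈ α.support, α i * k := by
        gcongr with i
        exact (MvPolynomial.totalDegree_pow _ _).trans (Nat.mul_le_mul_left _ (hf i))
    _ = (∑ i ∈ α.support, α i) * k := (Finset.sum_mul _ _ _).symm
    _ ≤ p.totalDegree * k := Nat.mul_le_mul_right _ (MvPolynomial.le_totalDegree hα)

variable {ι R : Type*} [CommRing R]

/-- The expansion of `Q (x - y)` as a polynomial in `x` whose coefficients are polynomials
in `y`, so that integrating in `y` leaves a polynomial in `x`. -/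
def subVars (Q : MvPolynomial ι R) : MvPolynomial ι (MvPolynomial ι R) :=
  MvPolynomial.aeval (fun i => .X i - .C (.X i)) Q

lemma totalDegree_subVars_le (Q : MvPolynomial ι R) : (subVars Q).totalDegree ≤ Q.totalDegree := by
  rcases subsingleton_or_nontrivial R
  · simp [Subsingleton.elim (subVars Q) 0]
  refine (totalDegree_aeval_le (k := 1) (fun i => ?_) Q).trans_eq (mul_one _)
  refine (MvPolynomial.totalDegree_sub _ _).trans ?_
  simp

lemma eval_map_eval_subVars (Q : MvPolynomial ι R) (x y : ι → R) :
    MvPolynomial.eval x (MvPolynomial.map (MvPolynomial.eval y) (subVars Q)) =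
      MvPolynomial.eval (x - y) Q := by
  induction Q using MvPolynomial.induction_on with
  | C a => simp [subVars, MvPolynomial.algebraMap_eq, MvPolynomial.algebraMap_apply]
  | add p q hp hq => simp_all [subVars]
  | mul_X p i hp => simp_all [subVars]

lemma exists_eval_eq_integral_eval_sub_mul {μ : Measure (EuclideanSpace ℝ ι)}
    {g : EuclideanSpace ℝ ι → ℝ}
    (hg : ∀ P : MvPolynomial ι ℝ,
      Integrable (fun y : EuclideanSpace ℝ ι => MvPolynomial.eval y P * g y) μ)
    (Q : MvPolynomial ι ℝ) :
    ∃ p : MvPolynomial ι ℝ, p.totalDegree ≤ Q.totalDegree ∧ ∀ x : EuclideanSpace ℝ ι,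
      MvPolynomial.eval x p = ∫ y, MvPolynomial.eval (x - y).ofLp Q * g y ∂μ := by
  refine ⟨∑ α ∈ (subVars Q).support,
    .monomial α (∫ y, MvPolynomial.eval y ((subVars Q).coeff α) * g y ∂μ), ?_, fun x => ?_⟩
  · refine MvPolynomial.totalDegree_finsetSum_le fun α hα => ?_
    exact (MvPolynomial.totalDegree_monomial_le _ _).trans <|
      (MvPolynomial.le_totalDegree hα).trans (totalDegree_subVars_le Q)
  · have expansion (y : EuclideanSpace ℝ ι) : MvPolynomial.eval (x - y).ofLp Q * g y =
        ∑ α ∈ (subVars Q).support, (α.prod fun i k => x i ^ k) *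
          (MvPolynomial.eval y ((subVars Q).coeff α) * g y) := by
      rw [WithLp.ofLp_sub, ← eval_map_eval_subVars, MvPolynomial.eval_map,
        MvPolynomial.eval₂_eq, Finset.sum_mul]
      exact Finset.sum_congr rfl fun α _ => by rw [Finsupp.prod]; ring
    simp only [expansion, map_sum, MvPolynomial.eval_monomial]
    rw [integral_finsetSum _ fun α _ => (hg _).const_mul _]
    exact Finset.sum_congr rfl fun α _ => by rw [integral_const_mul, mul_comm]

variable [Fintype ι]

lemma exists_eval_eq_integral_smul_and_hasFDerivAt {g : EuclideanSpace ℝ ι → ℝ}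
    (hg : ContDiff ℝ 1 g) (hg_supp : HasCompactSupport g) (Q : MvPolynomial ι ℝ) :
    ∃ p : MvPolynomial ι ℝ, p.totalDegree ≤ Q.totalDegree ∧ ∀ x : EuclideanSpace ℝ ι,
      MvPolynomial.eval x p = ∫ t : EuclideanSpace ℝ ι, MvPolynomial.eval t Q • g (x - t) ∧
      HasFDerivAt (fun z : EuclideanSpace ℝ ι => MvPolynomial.eval z p)
        (∫ t : EuclideanSpace ℝ ι, MvPolynomial.eval t Q • fderiv ℝ g (x - t)) x := by
  have integrable_mul (P : MvPolynomial ι ℝ) :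
      Integrable fun y : EuclideanSpace ℝ ι => MvPolynomial.eval y P * g y :=
    ((continuous_eval_mvPolynomial P).mul hg.continuous).integrable_of_hasCompactSupport
      hg_supp.mul_left
  obtain ⟨p, degree_p, hp⟩ := exists_eval_eq_integral_eval_sub_mul integrable_mul Q
  have eval_p (x : EuclideanSpace ℝ ι) :
      MvPolynomial.eval x p = ∫ t : EuclideanSpace ℝ ι, MvPolynomial.eval t Q • g (x - t) := by
    rw [hp, ← integral_sub_left_eq_self _ _ x]
    simp
  refine ⟨p, degree_p, fun x => ⟨eval_p x, ?_⟩⟩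
  simp only [eval_p]
  exact hg_supp.hasFDerivAt_convolution_right (ContinuousLinearMap.lsmul ℝ ℝ)
    (continuous_eval_mvPolynomial Q).locallyIntegrable hg x

end PolynomialConvolution

section ApproximateIdentity

lemma norm_sub_integral_smul_le {E W : Type*} [NormedAddCommGroup E] [MeasurableSpace E]
    [NormedAddCommGroup W] [NormedSpace ℝ W] [CompleteSpace W] {μ : Measure E} {K : E → ℝ}
    {F : E → W} {L : ℝ≥0} {x : E} (K_nonneg : ∀ t, 0 ≤ K t) (mass_eq : ∫ t, K t ∂μ = 1)
    (moment_integrable : Integrable (fun t => ‖t‖ * K t) μ)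
    (smul_integrable : Integrable (fun t => K t • F (x - t)) μ) (hF : LipschitzWith L F) :
    ‖F x - ∫ t, K t • F (x - t) ∂μ‖ ≤ L * ∫ t, ‖t‖ * K t ∂μ := by
  have K_integrable : Integrable K μ := integrable_of_integral_eq_one mass_eq
  have error_eq : F x - ∫ t, K t • F (x - t) ∂μ = ∫ t, K t • (F x - F (x - t)) ∂μ := by
    simp only [smul_sub]
    rw [integral_sub (K_integrable.smul_const _) smul_integrable, integral_smul_const, mass_eq,
      one_smul]
  rw [error_eq, ← integral_const_mul]
  refine norm_integral_le_of_norm_le (moment_integrable.const_mul _) (.of_forall fun t => ?_)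
  calc ‖K t • (F x - F (x - t))‖ = K t * ‖F x - F (x - t)‖ := by
        rw [norm_smul, Real.norm_of_nonneg (K_nonneg t)]
    _ ≤ K t * (L * ‖x - (x - t)‖) := by gcongr; exacts [K_nonneg t, hF.norm_sub_le _ _]
    _ = L * (‖t‖ * K t) := by rw [sub_sub_cancel]; ring

variable {ι : Type*}

lemma exists_pos_forall_notMem_cube_sub_notMem [Finite ι] {X S : Set (EuclideanSpace ℝ ι)}
    (hX : Bornology.IsBounded X) (hS : Bornology.IsBounded S) :
    ∃ R > 0, ∀ x ∈ X, ∀ t ∉ cube ι R, x - t ∉ S := by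
  cases nonempty_fintype ι
  obtain ⟨R, R_pos, hR⟩ := (hX.sub hS).exists_pos_norm_le
  refine ⟨R, R_pos, fun x hx t ht hxt => ht (mem_cube_of_norm_le ?_)⟩
  simpa using hR _ (sub_mem_sub hx hxt)

variable [Fintype ι]

lemma norm_sub_integral_eval_smul_le {W : Type*} [NormedAddCommGroup W] [NormedSpace ℝ W]
    [CompleteSpace W] {R : ℝ} {Q : MvPolynomial ι ℝ}
    (Q_nonneg : ∀ t : EuclideanSpace ℝ ι, 0 ≤ MvPolynomial.eval t Q)
    (mass_eq : ∫ t in cube ι R, MvPolynomial.eval t Q = 1) {F : EuclideanSpace ℝ ι → W} {L : ℝ≥0}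
    (hF : LipschitzWith L F) {x : EuclideanSpace ℝ ι}
    (F_eq_zero : ∀ t ∉ cube ι R, F (x - t) = 0) :
    ‖F x - ∫ t : EuclideanSpace ℝ ι, MvPolynomial.eval t Q • F (x - t)‖ ≤
      L * ∫ t in cube ι R, ‖t‖ * MvPolynomial.eval t Q := by
  rw [← setIntegral_eq_integral_of_forall_compl_eq_zero (s := cube ι R)
    fun t ht => by rw [F_eq_zero t ht, smul_zero]]
  have Q_cont := continuous_eval_mvPolynomial Q
  exact norm_sub_integral_smul_le Q_nonneg mass_eq
    ((continuous_norm.mul Q_cont).continuousOn.integrableOn_compact (isCompact_cube R))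
    ((Q_cont.smul (hF.continuous.comp (by fun_prop))).continuousOn.integrableOn_compact
      (isCompact_cube R)) hF

lemma exists_mvPolynomial_approx_of_hasCompactSupport {X : Set (EuclideanSpace ℝ ι)}
    (hX : Bornology.IsBounded X) {g : EuclideanSpace ℝ ι → ℝ} (hg : ContDiff ℝ 2 g)
    (hg_supp : HasCompactSupport g) :
    ∃ C : ℝ, 0 ≤ C ∧ ∀ d : ℕ, 1 ≤ d → ∃ p : MvPolynomial ι ℝ, p.totalDegree ≤ d ∧
      ∀ x ∈ X, |g x - MvPolynomial.eval x p| ≤ C / d ∧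
        ‖fderiv ℝ (fun z : EuclideanSpace ℝ ι => g z - MvPolynomial.eval z p) x‖ ≤ C / d := by
  obtain ⟨L₀, hL₀⟩ := hg.lipschitzWith_of_hasCompactSupport hg_supp two_ne_zero
  obtain ⟨L₁, hL₁⟩ := (hg.fderiv_right (m := 1) one_add_one_eq_two.le)
    |>.lipschitzWith_of_hasCompactSupport (hg_supp.fderiv ℝ) one_ne_zero
  obtain ⟨R, R_pos, hR⟩ :=
    exists_pos_forall_notMem_cube_sub_notMem hX (S := tsupport g) hg_supp.isCompact.isBounded
  set A : ℝ := 256 * Real.pi * R * Fintype.card ι ^ 2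
  refine ⟨max L₀ L₁ * A, by positivity, fun d hd => ?_⟩
  obtain ⟨Q, degree_Q, Q_nonneg, mass_eq, moment_le⟩ :=
    exists_nonneg_mvPolynomial_integral_norm_mul_le (ι := ι) R_pos hd
  obtain ⟨p, degree_p, hp⟩ :=
    exists_eval_eq_integral_smul_and_hasFDerivAt (hg.of_le one_le_two) hg_supp Q
  have error_le {L : ℝ≥0} (hL : L ≤ max L₀ L₁) :
      L * ∫ t in cube ι R, ‖t‖ * MvPolynomial.eval t Q ≤ max L₀ L₁ * A / d := by
    rw [mul_div_assoc]
    gcongr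
    · exact setIntegral_nonneg (isCompact_cube R).measurableSet fun t _ =>
        mul_nonneg (norm_nonneg t) (Q_nonneg t)
  refine ⟨p, degree_p.trans degree_Q, fun x hx => ?_⟩
  obtain ⟨eval_p, fderiv_p⟩ := hp x
  rw [((hg.differentiable two_ne_zero x).hasFDerivAt.fun_sub fderiv_p).fderiv, eval_p]
  exact ⟨(norm_sub_integral_eval_smul_le Q_nonneg mass_eq hL₀ fun t ht =>
      image_eq_zero_of_notMem_tsupport (hR x hx t ht)).trans (error_le (le_max_left _ _)),
    (norm_sub_integral_eval_smul_le Q_nonneg mass_eq hL₁ fun t ht =>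
      image_eq_zero_of_notMem_tsupport fun h => hR x hx t ht
        (tsupport_fderiv_subset ℝ h)).trans (error_le (le_max_right _ _))⟩

end ApproximateIdentity

section Cutoff

open scoped Manifold

variable {E F : Type*} [NormedAddCommGroup E] [NormedSpace ℝ E] [FiniteDimensional ℝ E]
  [NormedAddCommGroup F] [NormedSpace ℝ F]

lemma exists_contDiff_hasCompactSupport_eventuallyEq {n : ℕ} {X : Set E} (hX : IsCompact X)
    {h : E → F} (hh : ∀ x ∈ X, ContDiffAt ℝ n h x) :
    ∃ g : E → F, ContDiff ℝ n g ∧ HasCompactSupport g ∧ ∀ x ∈ X, g =ᶠ[𝓝 x] h := by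
  set U := {x | ContDiffAt ℝ n h x}
  have U_open : IsOpen U := isOpen_iff_mem_nhds.2 fun x (hx : ContDiffAt ℝ n h x) =>
    hx.eventually (by simp)
  obtain ⟨K, K_compact, X_sub_K, K_sub_U⟩ := exists_compact_between hX U_open hh
  obtain ⟨χ, χ_one, χ_zero, -⟩ := exists_contMDiffMap_one_nhds_of_subset_interior
    (n := n) 𝓘(ℝ, E) hX.isClosed X_sub_K
  have tsupport_sub : tsupport (fun x => χ x • h x) ⊆ K :=
    closure_minimal (fun x hx => by_contra fun hxK => hx (by simp [χ_zero x hxK]))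
      K_compact.isClosed
  refine ⟨fun x => χ x • h x, ?_, K_compact.of_isClosed_subset (isClosed_tsupport _) tsupport_sub,
    fun x hx => ?_⟩
  · exact contMDiff_iff_contDiff.1 <| contMDiff_of_tsupport fun x hx =>
      (χ.contMDiff.contDiff.contDiffAt.smul (K_sub_U (tsupport_sub hx))).contMDiffAt
  · filter_upwards [eventually_nhdsSet_iff_forall.1 χ_one x hx] with y hy
    rw [hy, one_smul]

end Cutoff

lemma supNormC1_le {n : ℕ} {X : Set (EuclideanSpace ℝ (Fin n))}
    {f : EuclideanSpace ℝ (Fin n) → ℝ} {a b : ℝ} (ha : 0 ≤ a) (hb : 0 ≤ b)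
    (abs_f_le : ∀ x ∈ X, |f x| ≤ a) (norm_fderiv_le : ∀ x ∈ X, ‖fderiv ℝ f x‖ ≤ b) :
    supNormC1 X f ≤ a + b := by
  refine add_le_add (Real.sSup_le (forall_mem_image.2 abs_f_le) ha)
    (Real.sSup_le (forall_mem_image.2 fun x hx => ?_) hb)
  rw [gradient, LinearIsometryEquiv.norm_map]
  exact norm_fderiv_le x hx

end

theorem bagby_approximation_general {n : ℕ} {X : Set (EuclideanSpace ℝ (Fin n))}
    (hX : IsCompact X) {h : EuclideanSpace ℝ (Fin n) → ℝ} (hh : ∀ x ∈ X, ContDiffAt ℝ 2 h x) :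
    ∃ c₁ : ℝ, 0 ≤ c₁ ∧ ∀ d : ℕ, 1 ≤ d → ∃ p : MvPolynomial (Fin n) ℝ,
      p.totalDegree ≤ d ∧
      supNormC1 X (fun x : EuclideanSpace ℝ (Fin n) => h x - MvPolynomial.eval x p) ≤ c₁ / d := by
  obtain ⟨g, g_contDiff, g_supp, g_eq⟩ :=
    exists_contDiff_hasCompactSupport_eventuallyEq (n := 2) hX hh
  obtain ⟨C, C_nonneg, hC⟩ :=
    exists_mvPolynomial_approx_of_hasCompactSupport hX.isBounded g_contDiff g_supp
  refine ⟨C + C, by positivity, fun d hd => ?_⟩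
  obtain ⟨p, degree_p, hp⟩ := hC d hd
  have error_eq {x : EuclideanSpace ℝ (Fin n)} (hx : x ∈ X) :
      (fun z : EuclideanSpace ℝ (Fin n) => g z - MvPolynomial.eval z p) =ᶠ[𝓝 x]
        fun z => h z - MvPolynomial.eval z p := (g_eq x hx).sub .rfl
  refine ⟨p, degree_p, ?_⟩
  rw [add_div]
  refine supNormC1_le (by positivity) (by positivity) (fun x hx => ?_) fun x hx => ?_
  · rw [← (error_eq hx).eq_of_nhds]
    exact (hp x hx).1
  · rw [← (error_eq hx).fderiv_eq]
    exact (hp x hx).2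

/-- Bagby–Bos–Levenberg: Let `X ⊂ ℝⁿ` be compact and `h : ℝⁿ → ℝ` be such that
`h` and `∇h` are continuously differentiable (i.e. `h` is of class `C²`). Then there is a
constant `c₁ ≥ 0` depending only on `h` and `X` such that for every integer `d ≥ 1` there is a
polynomial `p_d` in `n` variables with `deg p_d ≤ d` and `‖h − p_d‖_{C¹(X)} ≤ c₁/d`. -/
theorem bagby_approximation (n : ℕ) (X : Set (EuclideanSpace ℝ (Fin n))) (hX : IsCompact X)
    (h : EuclideanSpace ℝ (Fin n) → ℝ) (hh : ContDiff ℝ 2 h) :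
    ∃ c₁ : ℝ, 0 ≤ c₁ ∧ ∀ d : ℕ, 1 ≤ d → ∃ p : MvPolynomial (Fin n) ℝ,
      p.totalDegree ≤ d ∧
      supNormC1 X (fun x : EuclideanSpace ℝ (Fin n) => h x - MvPolynomial.eval x p) ≤ c₁ / d :=
  bagby_approximation_general hX fun _ _ => hh.contDiffAt
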